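/- Let P be a finite pure weighted graded poset of rank d, let 0 ≤ l ≤ d−1, and let α ∈ ℝ. For x ∈ P(l−1) let μ'_x and ν'_x denote, respectively, the second largest and the least eigenvalue of the self-adjoint operator M^+_{x,0} on C^0(P_x), and set μ'_{l−1} = max_{x∈P(l−1)} μ'_x and ν'_{l−1} = min_{x∈P(l−1)} ν'_x. Then for all f, g ∈ C^l: (i) Σ_{x∈P(l−1)} m(x)·⟨(M^+_{x,0} − α·Id)(Id − M^−_{x,0}) f_x, f_x⟩_x ≤ max{μ'_{l−1} − α, 0}·‖f‖², and (ii) Σ_{x∈P(l−1)} m(x)·|⟨(M^+_{x,0} − α·Id)(Id − M^−_{x,0}) f_x, g_x⟩_x| ≤ max{μ'_{l−1} − α, α − ν'_{l−1}}·‖f‖·‖g‖. -/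

import Mathlib

open Finset

attribute [local instance] Classical.propDecidable

noncomputable section

/-- A finite pure weighted graded poset of rank `d`, presented as a rank function
and a weight scheme on a finite partial order `P`. -/
structure WGP (P : Type) [Fintype P] [PartialOrder P] where
  /-- the rank of the poset -/
  d : ℤ
  /-- the rank function -/
  rk : P → ℤ
  rk_mono : Monotone rk
  rk_lb : ∀ x, -1 ≤ rk x
  rk_ub : ∀ x, rk x ≤ d
  rk_covBy : ∀ a b : P, a ⋖ b → rk b = rk a + 1
  bot_unique : ∃! x : P, rk x = -1
  isPure : ∀ x : P, ∃ y : P, rk y = d ∧ x ≤ y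
  /-- the weight function -/
  m : P → ℝ
  m_pos : ∀ x, 0 < m x
  /-- the transition probabilities: `p y x` is `p_{y → x}` -/
  p : P → P → ℝ
  p_nonneg : ∀ y x, 0 ≤ p y x
  p_pos_iff : ∀ y x, 0 < p y x ↔ x ⋖ y
  p_sum : ∀ y, 0 ≤ rk y → ∑ x ∈ univ.filter (fun x => x ⋖ y), p y x = 1
  m_eq : ∀ x, rk x < d → m x = ∑ y ∈ univ.filter (fun y => x ⋖ y), p y x * m y
  m_bot : ∀ x, rk x = -1 → m x = 1

/-- `T` has at most `n` eigenvalues greater than `c`, counted with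
(geometric) multiplicity. -/
def eigMultAboveLe {V : Type*} [AddCommGroup V] [Module ℝ V]
    (T : Module.End ℝ V) (c : ℝ) (n : ℕ) : Prop :=
  ∀ s : Finset ℝ, (∀ μ ∈ s, c < μ) →
    ∑ μ ∈ s, Module.finrank ℝ (T.eigenspace μ) ≤ n

/-- `μ` is the second largest eigenvalue of `T`, counted with multiplicity. -/
def IsSecondLargestEig {V : Type*} [AddCommGroup V] [Module ℝ V]
    (T : Module.End ℝ V) (μ : ℝ) : Prop :=
  T.HasEigenvalue μ ∧ eigMultAboveLe T μ 1 ∧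
    ∃ s : Finset ℝ, (∀ ν ∈ s, μ ≤ ν) ∧
      2 ≤ ∑ ν ∈ s, Module.finrank ℝ (T.eigenspace ν)

/-- `ν` is the least eigenvalue of `T`. -/
def IsLeastEig {V : Type*} [AddCommGroup V] [Module ℝ V]
    (T : Module.End ℝ V) (ν : ℝ) : Prop :=
  T.HasEigenvalue ν ∧ ∀ c : ℝ, T.HasEigenvalue c → ν ≤ c

/-- `λ(T) ≤ lam`, i.e. the second largest eigenvalue of `T` (with multiplicity)
is at most `lam` and the least eigenvalue is at least `-lam`. -/
def lamBd {V : Type*} [AddCommGroup V] [Module ℝ V]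
    (T : Module.End ℝ V) (lam : ℝ) : Prop :=
  eigMultAboveLe T lam 1 ∧ ∀ c : ℝ, T.HasEigenvalue c → -lam ≤ c

namespace WGP

variable {P : Type} [Fintype P] [PartialOrder P] (W : WGP P)

/-- The level set `P(i)`. -/
def lvl (i : ℤ) : Finset P := univ.filter (fun x => W.rk x = i)

/-- The weighted inner product on `C^i`. -/
def innerAt (i : ℤ) (f g : P → ℝ) : ℝ := ∑ x ∈ W.lvl i, W.m x * f x * g x

/-- The squared norm on `C^i`. -/
def normSqAt (i : ℤ) (f : P → ℝ) : ℝ := W.innerAt i f f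

/-- The norm on `C^i`. -/
def normAt (i : ℤ) (f : P → ℝ) : ℝ := Real.sqrt (W.normSqAt i f)

/-- The matrix of transition probabilities : entry `(y, x)` is `p_{y→x}`,
which vanishes unless `x ⋖ y`.  This is also the matrix of the up operator. -/
def upMat : Matrix P P ℝ := Matrix.of fun y x => W.p y x

/-- The matrix of the down operator. -/
def downMat : Matrix P P ℝ := Matrix.of fun x y => W.p y x * W.m y / W.m x

/-- The up operator `U`. -/
def Up (f : P → ℝ) : P → ℝ := W.upMat.mulVec f

/-- The down operator `D`. -/
def Down (f : P → ℝ) : P → ℝ := W.downMat.mulVec f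

/-- `chSum x y = Σ_{c ∈ Ch(y→x)} p(c)`, the total `p`-weight of maximal chains
from `x` up to `y` (the entry of the corresponding power of the transition
matrix). -/
def chSum (x y : P) : ℝ := (W.upMat ^ (W.rk y - W.rk x).toNat) y x

/-- The induced weight function of the link `P_x`. -/
def mL (x y : P) : ℝ := W.m y / W.m x * W.chSum x y

/-- The induced transition probabilities of the link `P_x` :
`pL x z y = (p_x)_{z → y}`. -/
def pL (x z y : P) : ℝ := W.p z y * W.chSum x y / W.chSum x z

/-- The level set `P_x(j)` of the link of `x`. -/
def linkLvl (x : P) (j : ℤ) : Finset P :=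
  univ.filter (fun y => x ≤ y ∧ W.rk y = W.rk x + 1 + j)

/-- The inner product of the link `P_x` at link-level `j`. -/
def innerL (x : P) (j : ℤ) (f g : P → ℝ) : ℝ :=
  ∑ y ∈ W.linkLvl x j, W.mL x y * f y * g y

/-- The matrix of the up operator of the link `P_x`. -/
def upMatL (x : P) : Matrix P P ℝ :=
  Matrix.of fun z y => if y ⋖ z ∧ x ≤ y then W.pL x z y else 0

/-- The matrix of the down operator of the link `P_x`. -/
def downMatL (x : P) : Matrix P P ℝ :=
  Matrix.of fun y z => if y ⋖ z then W.pL x z y * W.mL x z / W.mL x y else 0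

/-- The up operator of the link `P_x`. -/
def UpL (x : P) (f : P → ℝ) : P → ℝ := (W.upMatL x).mulVec f

/-- The down operator of the link `P_x`. -/
def DownL (x : P) (f : P → ℝ) : P → ℝ := (W.downMatL x).mulVec f

/-- The up-down walk `M^+_{x,0}` of the link `P_x`. -/
def MplusL (x : P) (f : P → ℝ) : P → ℝ := W.DownL x (W.UpL x f)

/-- The down-up walk `M^-_{x,0}` of the link `P_x`. -/
def MminusL (x : P) (f : P → ℝ) : P → ℝ := W.UpL x (W.DownL x f)

/-- The adjacency matrix. -/
def adjMat : Matrix P P ℝ := Matrix.of fun y x =>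
  if x = y then 0 else
    ∑ z ∈ univ.filter (fun z => x ⋖ z ∧ y ⋖ z),
      W.m z * W.p z x * W.p z y / ((1 - W.p z y) * W.m y)

/-- The adjacency operator. -/
def Adj (f : P → ℝ) : P → ℝ := W.adjMat.mulVec f

/-- The adjacency matrix of the link `P_x`. -/
def adjMatL (x : P) : Matrix P P ℝ := Matrix.of fun y w =>
  if w = y then 0 else
    ∑ z ∈ univ.filter (fun z => w ⋖ z ∧ y ⋖ z),
      W.mL x z * W.pL x z w * W.pL x z y / ((1 - W.pL x z y) * W.mL x y)

/-- The adjacency operator of the link `P_x`. -/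
def AdjL (x : P) (f : P → ℝ) : P → ℝ := (W.adjMatL x).mulVec f

/-- The up-down walk `M^+_l` as an endomorphism of `C^l`. -/
def MplusEnd (l : ℤ) : Module.End ℝ ({x : P // W.rk x = l} → ℝ) :=
  ((W.downMat * W.upMat).submatrix Subtype.val Subtype.val).mulVecLin

/-- The up-down walk `M^+_{x,0}` as an endomorphism of `C^0(P_x)`. -/
def MplusEndL (x : P) : Module.End ℝ ({y : P // x ⋖ y} → ℝ) :=
  ((W.downMatL x * W.upMatL x).submatrix Subtype.val Subtype.val).mulVecLin

/-- The adjacency operator `A_x` of the link `P_x` as an endomorphism of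
`C^0(P_x)`. -/
def AdjEndL (x : P) : Module.End ℝ ({y : P // x ⋖ y} → ℝ) :=
  ((W.adjMatL x).submatrix Subtype.val Subtype.val).mulVecLin

/-- A standard weight scheme. -/
def Standard : Prop :=
  ∀ y x : P, x ⋖ y → W.p y x = 1 / ((univ.filter (fun z => z ⋖ y)).card : ℝ)

/-- `P` is lower regular at level `i` with constant `N`. -/
def LowerRegAt (i : ℤ) (N : ℕ) : Prop :=
  ∀ y : P, W.rk y = i → (univ.filter (fun z => z ⋖ y)).card = N

/-- `P` is middle regular at level `i` with constant `N`. -/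
def MiddleRegAt (i : ℤ) (N : ℕ) : Prop :=
  ∀ x z : P, W.rk x = i + 1 → W.rk z = i - 1 → z < x →
    (univ.filter (fun y => z ⋖ y ∧ y ⋖ x)).card = N

/-- `P` is `∨∧`-regular at level `i` with constant `N`. -/
def WedgeRegAt (i : ℤ) (N : ℕ) : Prop :=
  ∀ y₁ y₂ : P, W.rk y₁ = i → W.rk y₂ = i → y₁ ≠ y₂ → (∃ z, y₁ ⋖ z ∧ y₂ ⋖ z) →
    (univ.filter (fun s => s ⋖ y₁ ∧ s ⋖ y₂)).card = N

/-- `P` is `⅄`-regular with constant `R`. -/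
def WyeReg (R : ℕ) : Prop :=
  ∀ u y₁ y₂ : P, W.rk u = 2 → W.rk y₁ = 0 → W.rk y₂ = 0 → y₁ ≠ y₂ →
    y₁ < u → y₂ < u →
    (univ.filter (fun z => y₁ ⋖ z ∧ y₂ ⋖ z ∧ z ⋖ u)).card = R

/-- Property UL.1 with constants `c`. -/
def UL1 (c : ℤ → ℝ) : Prop :=
  ∀ l : ℤ, 0 ≤ l → l < W.d → ∀ y : P, W.rk y = l → ∀ x : P, y ⋖ x →
    ∑ z ∈ univ.filter (fun z => z ⋖ y), W.p y z ^ 2 / W.chSum z x = c l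

/-- Property UL.2 with constants `c`. -/
def UL2 (c : ℤ → ℝ) : Prop :=
  ∀ l : ℤ, 0 ≤ l → l < W.d → ∀ y₁ y₂ : P, W.rk y₁ = l → W.rk y₂ = l → y₁ ≠ y₂ →
    ∀ x : P, y₁ ⋖ x → y₂ ⋖ x →
    ∑ z ∈ univ.filter (fun z => z ⋖ y₁ ∧ z ⋖ y₂),
      W.p y₁ z * W.p y₂ z / W.chSum z x = c l

/-- Property UL.3 with constants `c`. -/
def UL3 (c : ℤ → ℝ) : Prop :=
  ∀ l : ℤ, 0 ≤ l → l < W.d → ∀ y : P, W.rk y = l →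
    ∑ x ∈ univ.filter (fun x => y ⋖ x), W.m x * W.p x y ^ 2 = c l * W.m y

/-- Property AL. -/
def AL : Prop :=
  ∀ l : ℤ, 0 ≤ l → l ≤ W.d - 1 → ∀ x y : P, W.rk x = l → W.rk y = l → x ≠ y →
    ∑ z ∈ univ.filter (fun z => x ⋖ z ∧ y ⋖ z),
        W.m z * W.p z x * W.p z y / (1 - W.p z x)
    = ∑ z ∈ univ.filter (fun z => x ⋖ z ∧ y ⋖ z),
        W.m z * W.p z x * W.p z y *
          ∑ s ∈ univ.filter (fun s => s ⋖ x ∧ s ⋖ y),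
            W.p x s * W.p y s / (W.chSum s z - W.p z x * W.p x s)

/-- Equation TL.1 with constant `c`. -/
def TL1 (c : ℝ) : Prop :=
  ∀ y : P, W.rk y = 0 →
    c * W.m y = ∑ z ∈ univ.filter (fun z => y ⋖ z), W.m z * W.p z y ^ 2 *
      ∑ x ∈ univ.filter (fun x => x ⋖ z ∧ x ≠ y), W.p z x / (1 - W.p z x) ^ 2

/-- Equation TL.2 with constant `c`. -/
def TL2 (c : ℝ) : Prop :=
  ∀ y₁ y₂ : P, W.rk y₁ = 0 → W.rk y₂ = 0 → y₁ ≠ y₂ →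
    c * ∑ z ∈ univ.filter (fun z => y₁ ⋖ z ∧ y₂ ⋖ z),
          W.m z * W.p z y₁ * W.p z y₂ / (1 - W.p z y₁)
    = ∑ z ∈ univ.filter (fun z => y₁ ⋖ z ∧ y₂ ⋖ z),
        W.m z * W.p z y₁ * W.p z y₂ *
          ∑ x ∈ univ.filter (fun x => x ⋖ z ∧ x ≠ y₁ ∧ x ≠ y₂),
            W.p z x / (1 - W.p z x) ^ 2

/-- Equation TL.3 with constant `c`. -/
def TL3 (c : ℝ) : Prop :=
  ∀ y : P, W.rk y = 0 →
    c * W.m y =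
      ∑ x ∈ univ.filter (fun x => W.rk x = 0 ∧ x ≠ y),
        ∑ z ∈ univ.filter (fun z => x ⋖ z ∧ y ⋖ z),
          ∑ w ∈ univ.filter (fun w => w ≠ z ∧ x ⋖ w ∧ y ⋖ w),
            ∑ u ∈ univ.filter (fun u => z ⋖ u ∧ w ⋖ u),
              W.m u * W.p u z * W.p u w * W.p w y * W.p z y * W.p w x * W.p z x /
                (W.chSum x u * (1 - W.p u z * W.p z x / W.chSum x u) *
                  (1 - W.p w x) * (1 - W.p z x))

/-- Equation TL.4 with constant `c`. -/
def TL4 (c : ℝ) : Prop :=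
  ∀ y₁ y₂ : P, W.rk y₁ = 0 → W.rk y₂ = 0 → y₁ ≠ y₂ →
    c * ∑ z ∈ univ.filter (fun z => y₁ ⋖ z ∧ y₂ ⋖ z),
          W.m z * W.p z y₁ * W.p z y₂ / (1 - W.p z y₁)
    = ∑ x ∈ univ.filter (fun x => W.rk x = 0 ∧ x ≠ y₁ ∧ x ≠ y₂),
        ∑ z ∈ univ.filter (fun z => x ⋖ z ∧ y₂ ⋖ z),
          ∑ w ∈ univ.filter (fun w => w ≠ z ∧ x ⋖ w ∧ y₁ ⋖ w),
            ∑ u ∈ univ.filter (fun u => z ⋖ u ∧ w ⋖ u),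
              W.m u * W.p u z * W.p u w * W.p w y₁ * W.p z y₂ * W.p w x * W.p z x /
                (W.chSum x u * (1 - W.p u z * W.p z x / W.chSum x u) *
                  (1 - W.p w x) * (1 - W.p z x))

/-- The induced function `f̂_x ∈ C^0(P_x)` of `f ∈ C^0`. -/
def hatF (x : P) (f : P → ℝ) : P → ℝ := fun z =>
  (1 / (1 - W.p z x)) * ∑ y ∈ univ.filter (fun y => y ≠ x ∧ y ⋖ z), W.p z y * f y

/-- `P` is connected: the Markov chain `M^+_0` on `P(0)` is irreducible. -/
def Connected : Prop :=
  ∀ y z : P, W.rk y = 0 → W.rk z = 0 →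
    ∃ j : ℕ, 0 < j ∧ ((W.downMat * W.upMat) ^ j) z y ≠ 0

/-- The link `P_x` is connected: the Markov chain `M^+_{x,0}` on `P_x(0)` is
irreducible. -/
def LinkConnected (x : P) : Prop :=
  ∀ y z : P, x ⋖ y → x ⋖ z →
    ∃ j : ℕ, 0 < j ∧ ((W.downMatL x * W.upMatL x) ^ j) z y ≠ 0

/-- `c` is a nontrivial eigenvalue of the adjacency operator `A` of `P`,
i.e. one with an eigenvector orthogonal to the constants. -/
def IsNontrivEigAdj (c : ℝ) : Prop :=
  ∃ f : P → ℝ, (∃ y, W.rk y = 0 ∧ f y ≠ 0) ∧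
    (∀ y, W.rk y = 0 → W.Adj f y = c * f y) ∧
    W.innerAt 0 f (fun _ => 1) = 0

/-- `c` is a nontrivial eigenvalue of the adjacency operator `A_x` of the
link `P_x`. -/
def IsNontrivEigAdjL (x : P) (c : ℝ) : Prop :=
  ∃ f : P → ℝ, (∃ y, x ⋖ y ∧ f y ≠ 0) ∧
    (∀ y, x ⋖ y → W.AdjL x f y = c * f y) ∧
    W.innerL x 0 f (fun _ => 1) = 0

end WGP

/-!
Fix a link `P_x` and put on `C^0(P_x)` its weighted inner product. The operator `M^-_{x,0}` is the
orthogonal projection onto the constants, so `Id - M^-_{x,0}` is the projection onto `1ᗮ`. The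
matrix of `M^+_{x,0}` is row stochastic and satisfies detailed balance, so `M^+_{x,0}` is
self-adjoint with largest eigenvalue `1`, attained on the constants. As at most one eigenvalue,
with multiplicity, exceeds `μ` and all are at least `ν`, the quadratic form of `M^+_{x,0} - α Id`
on `1ᗮ` is at most `μ - α` and its norm there at most `max (μ - α) (α - ν)`. The global bounds
follow by summing over `x`, using the localization identity `∑ m(x) ‖f_x‖² = ‖f‖²` and, for the
second one, the Cauchy–Schwarz inequality.
-/

open scoped RealInnerProductSpace

section TopEigenvector

open Module

theorem mem_span_singleton_of_eigMultAboveLe_one {V : Type*} [AddCommGroup V] [Module ℝ V]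
    [FiniteDimensional ℝ V] {T : End ℝ V} {κ μ c : ℝ} {e v : V} (he : T.HasEigenvector κ e)
    (hμ : eigMultAboveLe T μ 1) (hv : T.HasEigenvector c v) (hμc : μ < c) (hcκ : c ≤ κ) :
    v ∈ ℝ ∙ e := by
  rcases hcκ.eq_or_lt with rfl | hlt
  · have hrank : finrank ℝ (T.eigenspace c) ≤ 1 := by simpa using hμ {c} (by simpa using hμc)
    have hspan : ℝ ∙ e = T.eigenspace c :=
      Submodule.eq_of_le_of_finrank_le ((Submodule.span_singleton_le_iff_mem _ _).2 he.1)
        (hrank.trans_eq (finrank_span_singleton he.2).symm)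
    exact hspan ▸ hv.1
  · have hsum := hμ {c, κ} (by simp [hμc, hμc.trans hlt])
    rw [sum_pair hlt.ne] at hsum
    have hpos {a : ℝ} {u : V} (hu : T.HasEigenvector a u) : 1 ≤ finrank ℝ (T.eigenspace a) :=
      Submodule.one_le_finrank_iff.2 (End.hasEigenvalue_of_hasEigenvector hu)
    have := hpos hv
    have := hpos he
    omega

variable {E : Type*} [NormedAddCommGroup E] [InnerProductSpace ℝ E] [FiniteDimensional ℝ E]
  {T : End ℝ E} {κ μ ν α : ℝ} {e h : E}

theorem eigenvalue_le_of_inner_ne_zero {c : ℝ} {v : E} (he : T.HasEigenvector κ e)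
    (hμ : eigMultAboveLe T μ 1) (hv : T.HasEigenvector c v) (hcκ : c ≤ κ) (heh : ⟪e, h⟫ = 0)
    (hvh : ⟪v, h⟫ ≠ 0) : c ≤ μ := by
  by_contra! hμc
  obtain ⟨a, rfl⟩ := Submodule.mem_span_singleton.1
    (mem_span_singleton_of_eigMultAboveLe_one he hμ hv hμc hcκ)
  exact hvh (by rw [real_inner_smul_left, heh, mul_zero])

theorem inner_eigenvectorBasis_map (hT : T.IsSymmetric) {n : ℕ} (hn : finrank ℝ E = n)
    (k : Fin n) (h : E) :
    ⟪hT.eigenvectorBasis hn k, T h⟫ = hT.eigenvalues hn k * ⟪hT.eigenvectorBasis hn k, h⟫ := by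
  simpa [OrthonormalBasis.repr_apply_apply] using hT.eigenvectorBasis_apply_self_apply hn h k

theorem inner_map_self_le_of_orthogonal (hT : T.IsSymmetric) (he : T.HasEigenvector κ e)
    (hκ : ∀ c, T.HasEigenvalue c → c ≤ κ) (hμ : eigMultAboveLe T μ 1) (heh : ⟪e, h⟫ = 0) :
    ⟪T h, h⟫ ≤ μ * ‖h‖ ^ 2 := by
  let b := hT.eigenvectorBasis rfl
  let lam := hT.eigenvalues rfl
  have hterm (k) : lam k * ⟪b k, h⟫ ^ 2 ≤ μ * ⟪b k, h⟫ ^ 2 := by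
    by_cases hk : ⟪b k, h⟫ = 0
    · simp [hk]
    · gcongr
      exact eigenvalue_le_of_inner_ne_zero he hμ (hT.hasEigenvector_eigenvectorBasis rfl k)
        (hκ _ (hT.hasEigenvalue_eigenvalues rfl k)) heh hk
  calc ⟪T h, h⟫ = ∑ k, ⟪T h, b k⟫ * ⟪b k, h⟫ := (b.sum_inner_mul_inner _ _).symm
    _ = ∑ k, lam k * ⟪b k, h⟫ ^ 2 := sum_congr rfl fun k _ => by
        rw [real_inner_comm, inner_eigenvectorBasis_map, mul_assoc, sq]
    _ ≤ ∑ k, μ * ⟪b k, h⟫ ^ 2 := sum_le_sum fun k _ => hterm k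
    _ = μ * ‖h‖ ^ 2 := by rw [← mul_sum, b.sum_sq_inner_right]

theorem norm_map_sub_smul_le_of_orthogonal (hT : T.IsSymmetric) (he : T.HasEigenvector κ e)
    (hκ : ∀ c, T.HasEigenvalue c → c ≤ κ) (hμ : eigMultAboveLe T μ 1)
    (hν : ∀ c, T.HasEigenvalue c → ν ≤ c) (hC : 0 ≤ max (μ - α) (α - ν)) (heh : ⟪e, h⟫ = 0) :
    ‖T h - α • h‖ ≤ max (μ - α) (α - ν) * ‖h‖ := by
  let b := hT.eigenvectorBasis rfl
  let lam := hT.eigenvalues rfl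
  set C := max (μ - α) (α - ν)
  have hcoef (k) : ⟪b k, T h - α • h⟫ = (lam k - α) * ⟪b k, h⟫ := by
    rw [inner_sub_right, inner_eigenvectorBasis_map, real_inner_smul_right, sub_mul]
  have hterm (k) : ⟪b k, T h - α • h⟫ ^ 2 ≤ C ^ 2 * ⟪b k, h⟫ ^ 2 := by
    rw [hcoef, mul_pow]
    by_cases hk : ⟪b k, h⟫ = 0
    · simp [hk]
    · have hle : lam k ≤ μ :=
        eigenvalue_le_of_inner_ne_zero he hμ (hT.hasEigenvector_eigenvectorBasis rfl k)
          (hκ _ (hT.hasEigenvalue_eigenvalues rfl k)) heh hk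
      have hge : ν ≤ lam k := hν _ (hT.hasEigenvalue_eigenvalues rfl k)
      have habs : |lam k - α| ≤ C :=
        abs_le.2 ⟨by linarith [le_max_right (μ - α) (α - ν)],
          by linarith [le_max_left (μ - α) (α - ν)]⟩
      exact mul_le_mul_of_nonneg_right (sq_le_sq' (abs_le.1 habs).1 (abs_le.1 habs).2)
        (sq_nonneg _)
  refine (sq_le_sq₀ (norm_nonneg _) (by positivity)).1 ?_
  calc ‖T h - α • h‖ ^ 2 = ∑ k, ⟪b k, T h - α • h⟫ ^ 2 := (b.sum_sq_inner_right _).symm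
    _ ≤ ∑ k, C ^ 2 * ⟪b k, h⟫ ^ 2 := sum_le_sum fun k _ => hterm k
    _ = (C * ‖h‖) ^ 2 := by rw [← mul_sum, b.sum_sq_inner_right, mul_pow]

theorem inner_map_sub_smul_starProjection_self_le (hT : T.IsSymmetric)
    (he : T.HasEigenvector κ e) (hκ : ∀ c, T.HasEigenvalue c → c ≤ κ)
    (hμ : eigMultAboveLe T μ 1) (α : ℝ) (f : E) :
    ⟪T ((ℝ ∙ e)ᗮ.starProjection f) - α • (ℝ ∙ e)ᗮ.starProjection f, f⟫
      ≤ max (μ - α) 0 * ‖f‖ ^ 2 := by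
  set K := (ℝ ∙ e)ᗮ
  set h := K.starProjection f
  have heh : ⟪e, h⟫ = 0 :=
    Submodule.mem_orthogonal_singleton_iff_inner_right.1 (K.starProjection_apply_mem f)
  have hmem : T h - α • h ∈ K := by
    rw [Submodule.mem_orthogonal_singleton_iff_inner_right, inner_sub_right, ← hT,
      End.mem_eigenspace_iff.1 he.1, real_inner_smul_left, real_inner_smul_right, heh]
    ring
  calc ⟪T h - α • h, f⟫ = ⟪T h - α • h, h⟫ := by
        nth_rw 1 [← K.starProjection_eq_self_iff.2 hmem]
        exact K.inner_starProjection_left_eq_right _ _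
    _ = ⟪T h, h⟫ - α * ‖h‖ ^ 2 := by
        rw [inner_sub_left, real_inner_smul_left, real_inner_self_eq_norm_sq]
    _ ≤ μ * ‖h‖ ^ 2 - α * ‖h‖ ^ 2 := by
        gcongr
        exact inner_map_self_le_of_orthogonal hT he hκ hμ heh
    _ = (μ - α) * ‖h‖ ^ 2 := by ring
    _ ≤ max (μ - α) 0 * ‖f‖ ^ 2 := by
        gcongr
        · exact le_max_left _ _
        · exact K.norm_starProjection_apply_le f

theorem abs_inner_map_sub_smul_starProjection_le (hT : T.IsSymmetric)
    (he : T.HasEigenvector κ e) (hκ : ∀ c, T.HasEigenvalue c → c ≤ κ)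
    (hμ : eigMultAboveLe T μ 1) (hν : ∀ c, T.HasEigenvalue c → ν ≤ c)
    (hC : 0 ≤ max (μ - α) (α - ν)) (f g : E) :
    |⟪T ((ℝ ∙ e)ᗮ.starProjection f) - α • (ℝ ∙ e)ᗮ.starProjection f, g⟫|
      ≤ max (μ - α) (α - ν) * (‖f‖ * ‖g‖) := by
  set K := (ℝ ∙ e)ᗮ
  set h := K.starProjection f
  have heh : ⟪e, h⟫ = 0 :=
    Submodule.mem_orthogonal_singleton_iff_inner_right.1 (K.starProjection_apply_mem f)
  calc |⟪T h - α • h, g⟫| ≤ ‖T h - α • h‖ * ‖g‖ := abs_real_inner_le_norm _ _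
    _ ≤ max (μ - α) (α - ν) * ‖h‖ * ‖g‖ := by
        gcongr
        exact norm_map_sub_smul_le_of_orthogonal hT he hκ hμ hν hC heh
    _ ≤ max (μ - α) (α - ν) * (‖f‖ * ‖g‖) := by
        rw [mul_assoc]
        gcongr
        exact K.norm_starProjection_apply_le f

end TopEigenvector

section WeightedFun

/-- The space `ℓ²(S, w)`: real functions on `S` with weighted inner product. A type synonym,
since `S → ℝ` carries the supremum norm. -/
def WeightedFun {S : Type*} (_w : S → ℝ) : Type _ := S → ℝ

namespace WeightedFun

variable {S : Type*} (w : S → ℝ)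

instance : AddCommGroup (WeightedFun w) := inferInstanceAs (AddCommGroup (S → ℝ))
instance : Module ℝ (WeightedFun w) := inferInstanceAs (Module ℝ (S → ℝ))
instance : One (WeightedFun w) := inferInstanceAs (One (S → ℝ))
instance [Finite S] : FiniteDimensional ℝ (WeightedFun w) :=
  inferInstanceAs (FiniteDimensional ℝ (S → ℝ))

variable [Fintype S] [hw : Fact (∀ i, 0 < w i)]

/-- The inner product `⟪f, g⟫ = ∑ i, w i * f i * g i`. -/
abbrev innerProductCore : InnerProductSpace.Core ℝ (WeightedFun w) where
  inner f g := ∑ i, w i * f i * g i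
  conj_inner_symm f g := sum_congr rfl fun i _ => mul_right_comm _ _ _
  re_inner_nonneg f := sum_nonneg fun i _ => by
    rw [mul_assoc]
    exact mul_nonneg (hw.out i).le (mul_self_nonneg _)
  add_left f g h := by
    rw [← sum_add_distrib]
    exact sum_congr rfl fun i _ => by rw [← add_mul, ← mul_add]; rfl
  smul_left f g r := by
    simp only [mul_sum]
    exact sum_congr rfl fun i _ => by
      change w i * (r * f i) * g i = r * (w i * f i * g i)
      ring
  definite f hf := by
    have hterm (i) : 0 ≤ w i * f i * f i := by
      rw [mul_assoc]
      exact mul_nonneg (hw.out i).le (mul_self_nonneg _)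
    funext i
    have := (sum_eq_zero_iff_of_nonneg fun i _ => hterm i).1 hf i (mem_univ i)
    change f i = 0
    simpa [mul_assoc, (hw.out i).ne'] using this

instance : NormedAddCommGroup (WeightedFun w) :=
  (innerProductCore w).toNormedAddCommGroup

instance : InnerProductSpace ℝ (WeightedFun w) :=
  InnerProductSpace.ofCore (innerProductCore w).toCore

variable {w}

theorem inner_eq_sum (f g : WeightedFun w) : ⟪f, g⟫ = ∑ i, w i * f i * g i := rfl

theorem norm_one_of_sum_eq_one (h : ∑ i, w i = 1) : ‖(1 : WeightedFun w)‖ = 1 := by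
  have hsq : ‖(1 : WeightedFun w)‖ ^ 2 = 1 := by
    rw [← real_inner_self_eq_norm_sq, inner_eq_sum, ← h]
    exact sum_congr rfl fun i _ => by
      change w i * 1 * 1 = w i
      ring
  exact (pow_eq_one_iff_of_nonneg (norm_nonneg _) two_ne_zero).1 hsq

theorem isSymmetric_mulVecLin {A : Matrix S S ℝ} (hA : ∀ i j, w i * A i j = w j * A j i) :
    LinearMap.IsSymmetric (E := WeightedFun w) A.mulVecLin := by
  intro f g
  calc ∑ i, w i * (∑ j, A i j * f j) * g i = ∑ i, ∑ j, w i * A i j * f j * g i := by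
        simp only [mul_sum, sum_mul, mul_assoc]
    _ = ∑ j, ∑ i, w i * A i j * f j * g i := sum_comm
    _ = ∑ j, w j * f j * ∑ i, A j i * g i := by
        simp only [mul_sum]
        exact sum_congr rfl fun j _ => sum_congr rfl fun i _ => by rw [hA]; ring

end WeightedFun

theorem eigenvalue_le_one_of_mem_rowStochastic {S : Type*} [Fintype S] [DecidableEq S]
    {A : Matrix S S ℝ} (hA : A ∈ Matrix.rowStochastic ℝ S) {c : ℝ}
    (hc : Module.End.HasEigenvalue A.mulVecLin c) : c ≤ 1 := by
  obtain ⟨i, hi⟩ := eigenvalue_mem_ball (A := A) hc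
  have hrow : A i i + ∑ j ∈ univ.erase i, ‖A i j‖ = 1 := by
    rw [← Matrix.sum_row_of_mem_rowStochastic hA i, ← add_sum_erase _ _ (mem_univ i)]
    exact congrArg _ (sum_congr rfl fun j _ => Real.norm_of_nonneg (hA.1 i j))
  rw [Metric.mem_closedBall, Real.dist_eq] at hi
  linarith [le_abs_self (c - A i i)]

end WeightedFun

theorem sum_subtype_eq_sum_of_eq_zero {ι M : Type*} [Fintype ι] [AddCommMonoid M] {p : ι → Prop}
    [Fintype {i // p i}] (F : ι → M) (hF : ∀ i, ¬ p i → F i = 0) :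
    ∑ i : {i // p i}, F i = ∑ i, F i :=
  Fintype.sum_of_injective Subtype.val Subtype.val_injective _ _ (by simpa using hF) fun _ => rfl

namespace WGP

variable {P : Type} [Fintype P] [PartialOrder P] (W : WGP P) {x y z : P}

section TransitionProbabilities

theorem p_pos (h : x ⋖ y) : 0 < W.p y x := (W.p_pos_iff y x).2 h

theorem p_eq_zero_of_not_covBy (h : ¬ x ⋖ y) : W.p y x = 0 :=
  (W.p_nonneg y x).eq_or_lt.elim Eq.symm fun hpos => absurd ((W.p_pos_iff y x).1 hpos) h

theorem sum_p (hy : 0 ≤ W.rk y) : ∑ x, W.p y x = 1 := by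
  rw [← W.p_sum y hy, sum_filter_of_ne]
  exact fun x _ hx => not_not.1 fun h => hx (W.p_eq_zero_of_not_covBy h)

theorem sum_p_mul_m (hx : W.rk x < W.d) : ∑ y, W.p y x * W.m y = W.m x := by
  rw [W.m_eq x hx, sum_filter_of_ne]
  exact fun y _ hy => not_not.1 fun h => hy (by rw [W.p_eq_zero_of_not_covBy h, zero_mul])

theorem rk_strictMono : StrictMono W.rk := fun a b hab => by
  obtain ⟨c, hac, hcb⟩ := exists_covBy_le_of_lt hab
  have := W.rk_covBy _ _ hac
  have := W.rk_mono hcb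
  omega

theorem covBy_iff_le_and_rk_eq : x ⋖ y ↔ x ≤ y ∧ W.rk y = W.rk x + 1 := by
  refine ⟨fun h => ⟨h.le, W.rk_covBy _ _ h⟩, fun ⟨hle, hrk⟩ => ⟨hle.lt_of_ne ?_, ?_⟩⟩
  · rintro rfl
    omega
  · intro c hxc hcy
    have := W.rk_strictMono hxc
    have := W.rk_strictMono hcy
    omega

theorem chSum_nonneg (x y : P) : 0 ≤ W.chSum x y := by
  have hpow (n : ℕ) (y x : P) : 0 ≤ (W.upMat ^ n) y x := by
    induction n generalizing x with
    | zero => exact Matrix.zero_le_one_elem y x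
    | succ n ih =>
      rw [pow_succ, Matrix.mul_apply]
      exact sum_nonneg fun w _ => mul_nonneg (ih w) (W.p_nonneg w x)
  exact hpow _ y x

theorem chSum_self (x : P) : W.chSum x x = 1 := by simp [chSum]

theorem chSum_of_covBy (h : x ⋖ y) : W.chSum x y = W.p y x := by
  have hrk : (W.rk y - W.rk x).toNat = 1 := by
    have := W.rk_covBy _ _ h
    omega
  rw [chSum, hrk, pow_one]
  rfl

theorem chSum_of_covBy_of_covBy (hxy : x ⋖ y) (hyz : y ⋖ z) :
    W.chSum x z = ∑ w, W.p z w * W.p w x := by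
  have hrk : (W.rk z - W.rk x).toNat = 2 := by
    have := W.rk_covBy _ _ hxy
    have := W.rk_covBy _ _ hyz
    omega
  rw [chSum, hrk, sq]
  rfl

theorem chSum_pos_of_covBy_of_covBy (hxy : x ⋖ y) (hyz : y ⋖ z) : 0 < W.chSum x z := by
  rw [W.chSum_of_covBy_of_covBy hxy hyz]
  exact sum_pos' (fun w _ => mul_nonneg (W.p_nonneg _ _) (W.p_nonneg _ _))
    ⟨y, mem_univ _, mul_pos (W.p_pos hyz) (W.p_pos hxy)⟩

end TransitionProbabilities

section LinkMatrices

theorem mL_of_covBy (h : x ⋖ y) : W.mL x y = W.m y / W.m x * W.p y x := by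
  rw [mL, W.chSum_of_covBy h]

theorem mL_pos (h : x ⋖ y) : 0 < W.mL x y := by
  rw [W.mL_of_covBy h]
  exact mul_pos (div_pos (W.m_pos y) (W.m_pos x)) (W.p_pos h)

theorem upMatL_of_covBy (hxy : x ⋖ y) (z : P) :
    W.upMatL x z y = W.p z y * W.p y x / W.chSum x z := by
  by_cases hyz : y ⋖ z
  · simp [upMatL, pL, hyz, hxy.le, W.chSum_of_covBy hxy]
  · simp [upMatL, hyz, W.p_eq_zero_of_not_covBy hyz]

theorem upMatL_eq_zero {w : P} (hxy : x ⋖ y) (hyz : y ⋖ z) (hxw : ¬ x ⋖ w) :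
    W.upMatL x z w = 0 := by
  refine if_neg fun ⟨hwz, hle⟩ => hxw (W.covBy_iff_le_and_rk_eq.2 ⟨hle, ?_⟩)
  have := W.rk_covBy _ _ hxy
  have := W.rk_covBy _ _ hyz
  have := W.rk_covBy _ _ hwz
  omega

theorem sum_upMatL (hxy : x ⋖ y) (hyz : y ⋖ z) :
    ∑ w : {w // x ⋖ w}, W.upMatL x z w = 1 := by
  calc ∑ w : {w // x ⋖ w}, W.upMatL x z w
      = ∑ w : {w // x ⋖ w}, W.p z w * W.p w x / W.chSum x z :=
        sum_congr rfl fun w _ => W.upMatL_of_covBy w.2 z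
    _ = ∑ w, W.p z w * W.p w x / W.chSum x z :=
        sum_subtype_eq_sum_of_eq_zero (fun w => W.p z w * W.p w x / W.chSum x z)
          fun w hw => by rw [W.p_eq_zero_of_not_covBy hw, mul_zero, zero_div]
    _ = 1 := by
        rw [← sum_div, ← W.chSum_of_covBy_of_covBy hxy hyz,
          div_self (W.chSum_pos_of_covBy_of_covBy hxy hyz).ne']

theorem downMatL_of_covBy (hxy : x ⋖ y) (z : P) :
    W.downMatL x y z = W.p z y * W.m z / W.m y := by
  by_cases hyz : y ⋖ z
  · have hch := (W.chSum_pos_of_covBy_of_covBy hxy hyz).ne'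
    have hmx := (W.m_pos x).ne'
    have hmy := (W.m_pos y).ne'
    have hp := (W.p_pos hxy).ne'
    simp only [downMatL, Matrix.of_apply, if_pos hyz, pL, mL, W.chSum_of_covBy hxy]
    field_simp
  · simp [downMatL, hyz, W.p_eq_zero_of_not_covBy hyz]

theorem sum_downMatL (hxy : x ⋖ y) (hy : W.rk y < W.d) : ∑ z, W.downMatL x y z = 1 := by
  simp only [W.downMatL_of_covBy hxy]
  rw [← sum_div, W.sum_p_mul_m hy, div_self (W.m_pos y).ne']

theorem downMatL_self (h : x ⋖ y) : W.downMatL x x y = W.mL x y := by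
  have hp := (W.p_pos h).ne'
  have hmx := (W.m_pos x).ne'
  simp only [downMatL, Matrix.of_apply, if_pos h, pL, mL, W.chSum_of_covBy h, chSum_self]
  field_simp

theorem UpL_apply_of_covBy (h : x ⋖ y) (f : P → ℝ) : W.UpL x f y = f x := by
  have hself : W.upMatL x y x = 1 := by
    simp [upMatL, pL, h, W.chSum_of_covBy h, W.chSum_self, (W.p_pos h).ne']
  have hne (w : P) (hw : w ≠ x) : W.upMatL x y w = 0 :=
    if_neg fun ⟨hwy, hxw⟩ => h.2 (hxw.lt_of_ne' hw) hwy.lt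
  calc W.UpL x f y = W.upMatL x y x * f x :=
        Fintype.sum_eq_single x fun w hw => mul_eq_zero_of_left (hne w hw) _
    _ = f x := by rw [hself, one_mul]

theorem MminusL_apply_of_covBy (h : x ⋖ y) (f : P → ℝ) :
    W.MminusL x f y = ∑ w : {w // x ⋖ w}, W.mL x w * f w := by
  calc W.MminusL x f y = ∑ w, W.downMatL x x w * f w := W.UpL_apply_of_covBy h _
    _ = ∑ w : {w // x ⋖ w}, W.downMatL x x w * f w :=
        (sum_subtype_eq_sum_of_eq_zero (fun w => W.downMatL x x w * f w)
          fun w hw => by simp [downMatL, hw]).symm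
    _ = ∑ w : {w // x ⋖ w}, W.mL x w * f w :=
        sum_congr rfl fun w _ => by rw [W.downMatL_self w.2]

end LinkMatrices

section LinkWalk

/-- The matrix of the up-down walk `M^+_{x,0}` on the atoms of the link of `x`; its `mulVecLin` is
`MplusEndL x` by definition. -/
def linkWalk (x : P) : Matrix {y // x ⋖ y} {y // x ⋖ y} ℝ :=
  (W.downMatL x * W.upMatL x).submatrix Subtype.val Subtype.val

theorem linkWalk_apply (i j : {y // x ⋖ y}) :
    W.linkWalk x i j = ∑ z, W.p z i * W.m z / W.m i * (W.p z j * W.p j x / W.chSum x z) :=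
  sum_congr rfl fun z _ =>
    congrArg₂ (· * ·) (W.downMatL_of_covBy i.2 z) (W.upMatL_of_covBy j.2 z)

theorem mL_mul_linkWalk_comm (i j : {y // x ⋖ y}) :
    W.mL x i * W.linkWalk x i j = W.mL x j * W.linkWalk x j i := by
  have hmi := (W.m_pos i).ne'
  have hmj := (W.m_pos j).ne'
  rw [linkWalk_apply, linkWalk_apply, mul_sum, mul_sum, W.mL_of_covBy i.2, W.mL_of_covBy j.2]
  refine sum_congr rfl fun z _ => ?_
  field_simp

theorem linkWalk_mem_rowStochastic (hx : W.rk x + 1 < W.d) :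
    W.linkWalk x ∈ Matrix.rowStochastic ℝ {y // x ⋖ y} := by
  refine Matrix.mem_rowStochastic_iff_sum.2 ⟨fun i j => ?_, fun i => ?_⟩
  · rw [linkWalk_apply]
    exact sum_nonneg fun z _ => mul_nonneg
      (div_nonneg (mul_nonneg (W.p_nonneg _ _) (W.m_pos _).le) (W.m_pos _).le)
      (div_nonneg (mul_nonneg (W.p_nonneg _ _) (W.p_nonneg _ _)) (W.chSum_nonneg _ _))
  · have hi : W.rk i < W.d := (W.rk_covBy _ _ i.2).trans_lt hx
    calc ∑ j, W.linkWalk x i j = ∑ z, W.downMatL x i z * ∑ j : {y // x ⋖ y}, W.upMatL x z j := by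
          simp only [mul_sum]
          exact sum_comm
      _ = ∑ z, W.downMatL x i z := sum_congr rfl fun z _ => by
          by_cases hz : i.1 ⋖ z
          · rw [W.sum_upMatL i.2 hz, mul_one]
          · simp [downMatL, hz]
      _ = 1 := W.sum_downMatL i.2 hi

theorem MplusL_apply_of_covBy (i : {y // x ⋖ y}) (f : P → ℝ) :
    W.MplusL x f i = W.MplusEndL x (fun j => f j) i := by
  calc W.MplusL x f i = ∑ z, W.downMatL x i z * ∑ w, W.upMatL x z w * f w := rfl
    _ = ∑ z, W.downMatL x i z * ∑ j : {y // x ⋖ y}, W.upMatL x z j * f j :=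
        sum_congr rfl fun z _ => by
          by_cases hz : i.1 ⋖ z
          · rw [sum_subtype_eq_sum_of_eq_zero (fun w => W.upMatL x z w * f w) fun w hw => by
              rw [W.upMatL_eq_zero i.2 hz hw, zero_mul]]
          · simp [downMatL, hz]
    _ = ∑ j : {y // x ⋖ y}, (∑ z, W.downMatL x i z * W.upMatL x z j) * f j := by
        simp only [mul_sum, sum_mul, mul_assoc]
        exact sum_comm

end LinkWalk

section Localization

instance (x : P) : Fact (∀ y : {y // x ⋖ y}, 0 < W.mL x y) := ⟨fun y => W.mL_pos y.2⟩

/-- `C^0(P_x)`, the functions on the atoms of the link of `x`, with the inner product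
`⟨·,·⟩_x`. -/
abbrev LinkFun (x : P) : Type _ := WeightedFun fun y : {y // x ⋖ y} => W.mL x y

/-- The up-down walk `M^+_{x,0}` as an operator on the inner product space
`LinkFun x`. -/
def linkWalkEnd (x : P) : Module.End ℝ (W.LinkFun x) := W.MplusEndL x

/-- The localization `f_x ∈ C^0(P_x)` of `f`. -/
def localize (x : P) (f : P → ℝ) : W.LinkFun x := fun y => f y

theorem innerL_zero_eq_inner (x : P) (f g : P → ℝ) :
    W.innerL x 0 f g = ⟪W.localize x f, W.localize x g⟫ :=
  sum_subtype _ (fun y => by simp [linkLvl, W.covBy_iff_le_and_rk_eq]) _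

theorem norm_one_linkFun (hx : W.rk x < W.d) : ‖(1 : W.LinkFun x)‖ = 1 := by
  refine WeightedFun.norm_one_of_sum_eq_one ?_
  calc ∑ y : {y // x ⋖ y}, W.mL x y = ∑ y : {y // x ⋖ y}, W.p y x * W.m y / W.m x :=
        sum_congr rfl fun y _ => by rw [W.mL_of_covBy y.2]; ring
    _ = ∑ y, W.p y x * W.m y / W.m x :=
        sum_subtype_eq_sum_of_eq_zero (fun y => W.p y x * W.m y / W.m x)
          fun y hy => by rw [W.p_eq_zero_of_not_covBy hy, zero_mul, zero_div]
    _ = 1 := by rw [← sum_div, W.sum_p_mul_m hx, div_self (W.m_pos x).ne']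

theorem localize_sub_MminusL (hx : W.rk x < W.d) (f : P → ℝ) :
    W.localize x (f - W.MminusL x f)
      = (ℝ ∙ (1 : W.LinkFun x))ᗮ.starProjection (W.localize x f) := by
  have hinner : ⟪(1 : W.LinkFun x), W.localize x f⟫ = ∑ y : {y // x ⋖ y}, W.mL x y * f y :=
    sum_congr rfl fun y _ => congrArg (· * f y) (mul_one _)
  rw [Submodule.starProjection_orthogonal_val,
    Submodule.starProjection_unit_singleton ℝ (W.norm_one_linkFun hx), hinner]
  funext y
  calc f y - W.MminusL x f y = f y - (∑ y : {y // x ⋖ y}, W.mL x y * f y) * 1 := by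
        rw [W.MminusL_apply_of_covBy y.2, mul_one]
    _ = _ := rfl

theorem m_mul_sq_norm_localize (x : P) (f : P → ℝ) :
    W.m x * ‖W.localize x f‖ ^ 2 = ∑ y, W.p y x * (W.m y * f y * f y) := by
  have hmx := (W.m_pos x).ne'
  calc W.m x * ‖W.localize x f‖ ^ 2
      = ∑ y : {y // x ⋖ y}, W.m x * (W.mL x y * f y * f y) := by
        rw [← real_inner_self_eq_norm_sq, WeightedFun.inner_eq_sum, mul_sum]
        rfl
    _ = ∑ y : {y // x ⋖ y}, W.p y x * (W.m y * f y * f y) := sum_congr rfl fun y _ => by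
        rw [W.mL_of_covBy y.2]
        field_simp
    _ = ∑ y, W.p y x * (W.m y * f y * f y) :=
        sum_subtype_eq_sum_of_eq_zero (fun y => W.p y x * (W.m y * f y * f y))
          fun y hy => by rw [W.p_eq_zero_of_not_covBy hy, zero_mul]

variable {l : ℤ}

theorem sum_lvl_p (hl : 0 ≤ l) (y : P) :
    ∑ x ∈ W.lvl (l - 1), W.p y x = if W.rk y = l then 1 else 0 := by
  have hrk {x : P} (hx : x ⋖ y) : W.rk x = W.rk y - 1 := by
    have := W.rk_covBy _ _ hx
    omega
  split_ifs with hy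
  · rw [← W.sum_p (hy ▸ hl), lvl, sum_filter_of_ne]
    exact fun x _ hx => hy ▸ hrk (not_not.1 fun h => hx (W.p_eq_zero_of_not_covBy h))
  · refine sum_eq_zero fun x hx => W.p_eq_zero_of_not_covBy fun h => hy ?_
    have := hrk h
    have : W.rk x = l - 1 := (mem_filter.1 hx).2
    omega

theorem sum_m_mul_sq_norm_localize (hl : 0 ≤ l) (f : P → ℝ) :
    ∑ x ∈ W.lvl (l - 1), W.m x * ‖W.localize x f‖ ^ 2 = W.normSqAt l f := by
  simp only [m_mul_sq_norm_localize]
  rw [sum_comm, normSqAt, innerAt, lvl.eq_def W l, sum_filter]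
  refine sum_congr rfl fun y _ => ?_
  rw [← sum_mul, W.sum_lvl_p hl, ite_mul, one_mul, zero_mul]

end Localization

section CorrectionTerms

/-- The correction term `(M^+_{x,0} - α Id)(Id - M^-_{x,0}) f_x`. Like `MplusL` and `MminusL` it is
a function on all of `P`; only its values on the atoms of the link of `x` matter. -/
def linkCorrection (x : P) (α : ℝ) (f : P → ℝ) : P → ℝ :=
  W.MplusL x (f - W.MminusL x f) - α • (f - W.MminusL x f)

theorem innerL_linkCorrection (hx : W.rk x < W.d) (α : ℝ) (f g : P → ℝ) :
    W.innerL x 0 (W.linkCorrection x α f) g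
      = ⟪W.linkWalkEnd x ((ℝ ∙ (1 : W.LinkFun x))ᗮ.starProjection (W.localize x f))
          - α • (ℝ ∙ (1 : W.LinkFun x))ᗮ.starProjection (W.localize x f), W.localize x g⟫ := by
  rw [innerL_zero_eq_inner, ← W.localize_sub_MminusL hx]
  refine congrArg (⟪·, W.localize x g⟫) (funext fun y => ?_)
  exact congrArg (· - _) (W.MplusL_apply_of_covBy y _)

theorem isSymmetric_linkWalkEnd (x : P) : (W.linkWalkEnd x).IsSymmetric :=
  WeightedFun.isSymmetric_mulVecLin W.mL_mul_linkWalk_comm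

theorem eigenvalue_linkWalkEnd_le_one (hx : W.rk x + 1 < W.d) {c : ℝ}
    (hc : (W.linkWalkEnd x).HasEigenvalue c) : c ≤ 1 :=
  eigenvalue_le_one_of_mem_rowStochastic (W.linkWalk_mem_rowStochastic hx) hc

theorem hasEigenvector_linkWalkEnd_one (hx : W.rk x + 1 < W.d) :
    (W.linkWalkEnd x).HasEigenvector 1 1 := by
  refine ⟨Module.End.mem_eigenspace_iff.2 ?_, fun h => ?_⟩
  · rw [one_smul]
    exact (W.linkWalk_mem_rowStochastic hx).2
  · have hnorm := W.norm_one_linkFun ((lt_add_one _).trans hx)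
    rw [h, norm_zero] at hnorm
    exact zero_ne_one hnorm

theorem innerL_linkCorrection_self_le (hx : W.rk x + 1 < W.d) {μ : ℝ}
    (hμ : eigMultAboveLe (W.MplusEndL x) μ 1) (α : ℝ) (f : P → ℝ) :
    W.innerL x 0 (W.linkCorrection x α f) f ≤ max (μ - α) 0 * ‖W.localize x f‖ ^ 2 := by
  rw [W.innerL_linkCorrection ((lt_add_one _).trans hx)]
  exact inner_map_sub_smul_starProjection_self_le (W.isSymmetric_linkWalkEnd x)
    (W.hasEigenvector_linkWalkEnd_one hx) (fun _ => W.eigenvalue_linkWalkEnd_le_one hx) hμ α _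

theorem abs_innerL_linkCorrection_le (hx : W.rk x + 1 < W.d) {μ ν α : ℝ}
    (hμ : eigMultAboveLe (W.MplusEndL x) μ 1) (hν : ∀ c, (W.MplusEndL x).HasEigenvalue c → ν ≤ c)
    (hC : 0 ≤ max (μ - α) (α - ν)) (f g : P → ℝ) :
    |W.innerL x 0 (W.linkCorrection x α f) g|
      ≤ max (μ - α) (α - ν) * (‖W.localize x f‖ * ‖W.localize x g‖) := by
  rw [W.innerL_linkCorrection ((lt_add_one _).trans hx)]
  exact abs_inner_map_sub_smul_starProjection_le (W.isSymmetric_linkWalkEnd x)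
    (W.hasEigenvector_linkWalkEnd_one hx) (fun _ => W.eigenvalue_linkWalkEnd_le_one hx) hμ hν hC _ _

theorem sum_m_mul_norm_localize_mul_norm_localize_le (hl : 0 ≤ l) (f g : P → ℝ) :
    ∑ x ∈ W.lvl (l - 1), W.m x * (‖W.localize x f‖ * ‖W.localize x g‖)
      ≤ W.normAt l f * W.normAt l g := by
  have hnonneg (h : P → ℝ) (x : P) : 0 ≤ W.m x * ‖W.localize x h‖ ^ 2 :=
    mul_nonneg (W.m_pos x).le (sq_nonneg _)
  calc ∑ x ∈ W.lvl (l - 1), W.m x * (‖W.localize x f‖ * ‖W.localize x g‖)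
      = ∑ x ∈ W.lvl (l - 1), √(W.m x * ‖W.localize x f‖ ^ 2)
          * √(W.m x * ‖W.localize x g‖ ^ 2) := sum_congr rfl fun x _ => by
        rw [Real.sqrt_mul (W.m_pos x).le, Real.sqrt_mul (W.m_pos x).le,
          Real.sqrt_sq (norm_nonneg _), Real.sqrt_sq (norm_nonneg _), mul_mul_mul_comm,
          Real.mul_self_sqrt (W.m_pos x).le]
    _ ≤ W.normAt l f * W.normAt l g := by
        rw [normAt, normAt, ← W.sum_m_mul_sq_norm_localize hl, ← W.sum_m_mul_sq_norm_localize hl]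
        exact Real.sum_sqrt_mul_sqrt_le _ (hnonneg f) (hnonneg g)

theorem sum_innerL_linkCorrection_self_le (hl : 0 ≤ l) (hld : l < W.d) {μ : ℝ}
    (hμ : ∀ x, W.rk x = l - 1 → eigMultAboveLe (W.MplusEndL x) μ 1) (α : ℝ) (f : P → ℝ) :
    ∑ x ∈ W.lvl (l - 1), W.m x * W.innerL x 0 (W.linkCorrection x α f) f
      ≤ max (μ - α) 0 * W.normSqAt l f := by
  rw [← W.sum_m_mul_sq_norm_localize hl, mul_sum]
  refine sum_le_sum fun x hx => ?_
  have hrk : W.rk x = l - 1 := (mem_filter.1 hx).2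
  rw [mul_left_comm]
  exact mul_le_mul_of_nonneg_left
    (W.innerL_linkCorrection_self_le (by omega) (hμ x hrk) α f) (W.m_pos x).le

theorem sum_abs_innerL_linkCorrection_le (hl : 0 ≤ l) (hld : l < W.d) {μ ν α : ℝ}
    (hμ : ∀ x, W.rk x = l - 1 → eigMultAboveLe (W.MplusEndL x) μ 1)
    (hν : ∀ x, W.rk x = l - 1 → ∀ c, (W.MplusEndL x).HasEigenvalue c → ν ≤ c)
    (hC : 0 ≤ max (μ - α) (α - ν)) (f g : P → ℝ) :
    ∑ x ∈ W.lvl (l - 1), W.m x * |W.innerL x 0 (W.linkCorrection x α f) g|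
      ≤ max (μ - α) (α - ν) * W.normAt l f * W.normAt l g := by
  set C := max (μ - α) (α - ν)
  calc ∑ x ∈ W.lvl (l - 1), W.m x * |W.innerL x 0 (W.linkCorrection x α f) g|
      ≤ ∑ x ∈ W.lvl (l - 1), W.m x * (C * (‖W.localize x f‖ * ‖W.localize x g‖)) := by
        refine sum_le_sum fun x hx => ?_
        have hrk : W.rk x = l - 1 := (mem_filter.1 hx).2
        exact mul_le_mul_of_nonneg_left
          (W.abs_innerL_linkCorrection_le (by omega) (hμ x hrk) (hν x hrk) hC f g) (W.m_pos x).le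
    _ = C * ∑ x ∈ W.lvl (l - 1), W.m x * (‖W.localize x f‖ * ‖W.localize x g‖) := by
        simp only [mul_sum, mul_left_comm]
    _ ≤ C * (W.normAt l f * W.normAt l g) :=
        mul_le_mul_of_nonneg_left (W.sum_m_mul_norm_localize_mul_norm_localize_le hl f g) hC
    _ = C * W.normAt l f * W.normAt l g := (mul_assoc _ _ _).symm

end CorrectionTerms

end WGP

/-- bounding the correction terms via the second largest and
least eigenvalues of the link walks. -/
theorem stmt7 {P : Type} [Fintype P] [PartialOrder P] (W : WGP P)
    (l : ℤ) (hl0 : 0 ≤ l) (hld : l ≤ W.d - 1) (α : ℝ)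
    (muF nuF : P → ℝ)
    (hmuF : ∀ x : P, W.rk x = l - 1 → IsSecondLargestEig (W.MplusEndL x) (muF x))
    (hnuF : ∀ x : P, W.rk x = l - 1 → IsLeastEig (W.MplusEndL x) (nuF x))
    (mu' nu' : ℝ)
    (hmu'ub : ∀ x : P, W.rk x = l - 1 → muF x ≤ mu')
    (hmu'mem : ∃ x : P, W.rk x = l - 1 ∧ muF x = mu')
    (hnu'lb : ∀ x : P, W.rk x = l - 1 → nu' ≤ nuF x)
    (hnu'mem : ∃ x : P, W.rk x = l - 1 ∧ nuF x = nu')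
    (f g : P → ℝ) :
    (∑ x ∈ W.lvl (l - 1), W.m x *
        W.innerL x 0
          (fun y => W.MplusL x (fun w => f w - W.MminusL x f w) y
            - α * (f y - W.MminusL x f y)) f
      ≤ max (mu' - α) 0 * W.normSqAt l f) ∧
    (∑ x ∈ W.lvl (l - 1), W.m x *
        |W.innerL x 0
          (fun y => W.MplusL x (fun w => f w - W.MminusL x f w) y
            - α * (f y - W.MminusL x f y)) g|
      ≤ max (mu' - α) (α - nu') * W.normAt l f * W.normAt l g) := by
  have hμ (x : P) (hx : W.rk x = l - 1) : eigMultAboveLe (W.MplusEndL x) mu' 1 :=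
    fun s hs => (hmuF x hx).2.1 s fun c hc => (hmu'ub x hx).trans_lt (hs c hc)
  have hν (x : P) (hx : W.rk x = l - 1) (c : ℝ) (hc : (W.MplusEndL x).HasEigenvalue c) :
      nu' ≤ c :=
    (hnu'lb x hx).trans ((hnuF x hx).2 c hc)
  have hle : nu' ≤ mu' := by
    obtain ⟨x, hx, rfl⟩ := hmu'mem
    exact hν x hx _ (hmuF x hx).1
  have hC : 0 ≤ max (mu' - α) (α - nu') := by
    rcases le_total α mu' with h | h
    · exact le_max_of_le_left (sub_nonneg.2 h)
    · exact le_max_of_le_right (sub_nonneg.2 (hle.trans h))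
  have hld' : l < W.d := Int.lt_of_le_sub_one hld
  exact ⟨W.sum_innerL_linkCorrection_self_le hl0 hld' hμ α f,
    W.sum_abs_innerL_linkCorrection_le hl0 hld' hμ hν hC f g⟩
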